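/- Suppose (g_n^*) is an optimal configuration with overall channel h^* ≠ 0, and let n be an element with v_n ≠ 0. If element n is on, i.e., g_n^* = F_{n,l} for some index l, then ang(h^*, F_{n,l}) ≤ ang(h^*, F_{n,i}) for every i ∈ {1,…,K}; that is, any element that is on in the optimal configuration uses the available phase shift whose reflected vector has the smallest angle with h^*. -/

import Mathlib

/-- The angle in `[0,π]` between two nonzero complex numbers regarded as plane vectors:
`ang a b = arccos (Re (a * conj b) / (|a| * |b|))`. -/
noncomputable def ang (a b : ℂ) : ℝ :=
  Real.arccos ((a * (starRingEnd ℂ) b).re / (‖a‖ * ‖b‖))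

/-!
If switching element `n` from `g n` to another vector `w` does not increase the norm of the overall
channel `h`, then `‖h + (w - g n)‖ ≤ ‖h‖`; expanding the square gives `⟪h, w⟫ ≤ ⟪h, g n⟫`. The phase
shifts of one element all produce vectors of the same norm, and among such vectors a larger inner
product with `h` is the same as a smaller angle with `h`.
-/

open InnerProductGeometry
open scoped RealInnerProductSpace

theorem ang_eq_angle (a b : ℂ) : ang a b = angle a b := by
  rw [ang, angle, real_inner_comm, Complex.inner, mul_comm a]

theorem sum_update_eq_add_sub {ι M : Type*} [Fintype ι] [DecidableEq ι] [AddCommGroup M]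
    (g : ι → M) (n : ι) (w : M) :
    ∑ m, Function.update g n w m = ∑ m, g m + (w - g n) := by
  rw [Finset.sum_update_of_mem (Finset.mem_univ n), ← Finset.erase_eq,
    Finset.sum_erase_eq_sub (Finset.mem_univ n)]
  abel

section InnerProductSpace

variable {V : Type*} [NormedAddCommGroup V] [InnerProductSpace ℝ V]

theorem real_inner_nonpos_of_norm_add_le {x y : V} (h : ‖x + y‖ ≤ ‖x‖) : ⟪x, y⟫ ≤ 0 := by
  have hsq : ‖x + y‖ ^ 2 ≤ ‖x‖ ^ 2 := by gcongr
  rw [norm_add_sq_real] at hsq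
  linarith [sq_nonneg ‖y‖]

theorem angle_le_angle_iff_inner_le_inner {x y z : V} (hx : x ≠ 0) (hy : y ≠ 0)
    (hyz : ‖y‖ = ‖z‖) : angle x y ≤ angle x z ↔ ⟪x, z⟫ ≤ ⟪x, y⟫ := by
  have hpos : 0 < ‖x‖ * ‖y‖ := mul_pos (norm_pos_iff.mpr hx) (norm_pos_iff.mpr hy)
  rw [← Real.strictAntiOn_cos.le_iff_ge ⟨angle_nonneg x z, angle_le_pi x z⟩
    ⟨angle_nonneg x y, angle_le_pi x y⟩, cos_angle, cos_angle, ← hyz,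
    div_le_div_iff_of_pos_right hpos]

variable {ι : Type*} [Fintype ι] {S : ι → Set V} {h_d : V} {g : ι → V}

theorem inner_le_inner_of_forall_norm_le (hg : ∀ m, g m ∈ S m)
    (hopt : ∀ g' : ι → V, (∀ m, g' m ∈ S m) → ‖h_d + ∑ m, g' m‖ ≤ ‖h_d + ∑ m, g m‖)
    {n : ι} {w : V} (hw : w ∈ S n) :
    ⟪h_d + ∑ m, g m, w⟫ ≤ ⟪h_d + ∑ m, g m, g n⟫ := by
  classical
  have hmem : ∀ m, Function.update g n w m ∈ S m :=
    (Function.forall_update_iff g fun m z ↦ z ∈ S m).mpr ⟨hw, fun m _ ↦ hg m⟩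
  have hle := hopt _ hmem
  rw [sum_update_eq_add_sub, ← add_assoc] at hle
  rw [← sub_nonpos, ← inner_sub_right]
  exact real_inner_nonpos_of_norm_add_le hle

theorem stmt_11_general (hg : ∀ m, g m ∈ S m)
    (hopt : ∀ g' : ι → V, (∀ m, g' m ∈ S m) → ‖h_d + ∑ m, g' m‖ ≤ ‖h_d + ∑ m, g m‖)
    (hstar : h_d + ∑ m, g m ≠ 0) {n : ι} (hgn : g n ≠ 0)
    {w : V} (hw : w ∈ S n) (hnorm : ‖g n‖ = ‖w‖) :
    angle (h_d + ∑ m, g m) (g n) ≤ angle (h_d + ∑ m, g m) w :=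
  (angle_le_angle_iff_inner_le_inner hstar hgn hnorm).mpr
    (inner_le_inner_of_forall_norm_le hg hopt hw)

end InnerProductSpace

/-- Any element that is on in an optimal configuration uses the available phase shift whose
reflected vector has the smallest angle with `h^*`. -/
theorem stmt_11
    {N K : ℕ} (hN : 0 < N) (hK : 0 < K)
    (h_d : ℂ) (v : Fin N → ℂ) (φ : Fin K → ℝ)
    (hφinj : Function.Injective φ)
    (hφrange : ∀ i, 0 ≤ φ i ∧ φ i < 2 * Real.pi)
    (F : Fin N → Fin K → ℂ)
    (hF : ∀ m i, F m i = v m * Complex.exp ((φ i : ℂ) * Complex.I))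
    (g : Fin N → ℂ)
    (hg : ∀ m, g m = 0 ∨ ∃ i, g m = F m i)
    (hopt : ∀ g' : Fin N → ℂ, (∀ m, g' m = 0 ∨ ∃ i, g' m = F m i) →
      ‖h_d + ∑ m, g' m‖ ≤ ‖h_d + ∑ m, g m‖)
    (hstar : h_d + ∑ m, g m ≠ 0)
    (n : Fin N) (hvn : v n ≠ 0)
    (l : Fin K) (hl : g n = F n l) :
    ∀ i, ang (h_d + ∑ m, g m) (F n l) ≤ ang (h_d + ∑ m, g m) (F n i) := by
  intro i
  rw [ang_eq_angle, ang_eq_angle, ← hl]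
  exact stmt_11_general (S := fun m ↦ {z | z = 0 ∨ ∃ i, z = F m i}) hg hopt hstar
    (by simp [hl, hF, hvn]) (Or.inr ⟨i, rfl⟩) (by simp [hl, hF])
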